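/- The discrete Hilbert transform is bounded on ℓ^p(ℤ) for 1 < p < ∞: the convolution operator with the sequence (1/j)_{j≠0} (and 0 at j = 0) maps ℓ^p(ℤ) boundedly to ℓ^p(ℤ). -/

import Mathlib

open Real

open Filter Topology ComplexConjugate

/-- The discrete Hilbert transform of the restriction of `a` to `s`; the diagonal term vanishes
because `0⁻¹ = 0`. -/
noncomputable def hilb (s : Finset ℤ) (a : ℤ → ℂ) (n : ℤ) : ℂ :=
  ∑ m ∈ s, ((n - m : ℤ) : ℂ)⁻¹ * a m

/-- Convolution of the restriction of `a` to `s` with the square of the Hilbert kernel. -/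
noncomputable def sqConv (s : Finset ℤ) (a : ℤ → ℂ) (n : ℤ) : ℂ :=
  ∑ m ∈ s, (((n - m : ℤ) : ℂ)⁻¹) ^ 2 * a m

lemma kernel_mul_kernel (n m l : ℤ) :
    ((n - m : ℤ) : ℂ)⁻¹ * ((n - l : ℤ) : ℂ)⁻¹ =
      ((n - m : ℤ) : ℂ)⁻¹ * ((m - l : ℤ) : ℂ)⁻¹ + ((n - l : ℤ) : ℂ)⁻¹ * ((l - m : ℤ) : ℂ)⁻¹
      + (if m = l then (((n - m : ℤ) : ℂ)⁻¹) ^ 2 else 0)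
      + (if n = m then (((n - l : ℤ) : ℂ)⁻¹) ^ 2 else 0)
      + (if n = l then (((n - m : ℤ) : ℂ)⁻¹) ^ 2 else 0) := by
  by_cases h1 : m = l
  · subst h1
    by_cases h2 : n = m
    · simp [h2]
    · simp [h2, sq]
  · by_cases h2 : n = m
    · subst h2
      have h3 : ((n : ℂ) - l) ≠ 0 := by
        rw [sub_ne_zero]; exact_mod_cast h1
      have h4 : ((l : ℂ) - n) ≠ 0 := by
        rw [← neg_sub, neg_ne_zero]; exact h3
      simp only [h1, if_false, if_true, sub_self, Int.cast_zero, inv_zero]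
      push_cast
      field_simp
      ring
    · by_cases h3 : n = l
      · subst h3
        have h3 : ((m : ℂ) - n) ≠ 0 := by
          rw [sub_ne_zero]; exact_mod_cast h1
        have h4 : ((n : ℂ) - m) ≠ 0 := by
          rw [← neg_sub, neg_ne_zero]; exact h3
        simp only [h1, h2, if_false, if_true, sub_self, Int.cast_zero, inv_zero]
        push_cast
        field_simp
        ring
      · have e1 : ((n : ℂ) - l) ≠ 0 := by
          rw [sub_ne_zero]; exact_mod_cast h3
        have e2 : ((n : ℂ) - m) ≠ 0 := by
          rw [sub_ne_zero]; exact_mod_cast h2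
        have e3 : ((m : ℂ) - l) ≠ 0 := by
          rw [sub_ne_zero]; exact_mod_cast h1
        have e4 : ((l : ℂ) - m) ≠ 0 := by
          rw [← neg_sub, neg_ne_zero]; exact e3
        simp only [h1, h2, h3, if_false]
        push_cast
        have : (l : ℂ) - m = -(m - l) := by ring
        rw [this, inv_neg]
        field_simp
        ring

/-- Cotlar's identity for the discrete Hilbert transform. -/
lemma hilb_mul_hilb (s : Finset ℤ) (a b : ℤ → ℂ) {n : ℤ} (hn : n ∈ s) :
    hilb s a n * hilb s b n =
      hilb s (fun m => a m * hilb s b m) n + hilb s (fun m => b m * hilb s a m) n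
      + sqConv s (fun m => a m * b m) n + a n * sqConv s b n + b n * sqConv s a n := by
  have h1 : hilb s a n * hilb s b n = ∑ m ∈ s, ∑ l ∈ s,
      (((n - m : ℤ) : ℂ)⁻¹ * ((n - l : ℤ) : ℂ)⁻¹) * (a m * b l) := by
    rw [hilb, hilb, Finset.sum_mul_sum]
    exact Finset.sum_congr rfl fun m _ => Finset.sum_congr rfl fun l _ => by ring
  have h2 : hilb s (fun m => a m * hilb s b m) n = ∑ m ∈ s, ∑ l ∈ s,
      (((n - m : ℤ) : ℂ)⁻¹ * ((m - l : ℤ) : ℂ)⁻¹) * (a m * b l) := by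
    simp only [hilb, Finset.mul_sum]
    exact Finset.sum_congr rfl fun m _ => Finset.sum_congr rfl fun l _ => by ring
  have h3 : hilb s (fun m => b m * hilb s a m) n = ∑ m ∈ s, ∑ l ∈ s,
      (((n - l : ℤ) : ℂ)⁻¹ * ((l - m : ℤ) : ℂ)⁻¹) * (a m * b l) := by
    rw [Finset.sum_comm]
    simp only [hilb, Finset.mul_sum]
    exact Finset.sum_congr rfl fun m _ => Finset.sum_congr rfl fun l _ => by ring
  rw [h1, h2, h3]
  simp_rw [kernel_mul_kernel n, add_mul, Finset.sum_add_distrib]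
  congr 1
  · congr 1
    · congr 1
      rw [sqConv]
      refine Finset.sum_congr rfl fun m hm => ?_
      simp [ite_mul, hm]
    · simp only [ite_mul, zero_mul]
      rw [Finset.sum_comm]
      simp only [Finset.sum_ite_eq, hn, if_true, sqConv, Finset.mul_sum]
      exact Finset.sum_congr rfl fun m _ => by ring
  · simp only [ite_mul, zero_mul, Finset.sum_ite_eq, hn, if_true, sqConv, Finset.mul_sum]
    exact Finset.sum_congr rfl fun m _ => by ring

/-- The sum of `1 / j ^ 2` over the nonzero integers. -/
noncomputable def sqSum : ℝ := ∑' j : ℤ, 1 / (j : ℝ) ^ 2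

lemma sqSum_nonneg : 0 ≤ sqSum := tsum_nonneg fun j => by positivity

lemma sum_inv_sq_le (s : Finset ℤ) (n : ℤ) : ∑ m ∈ s, 1 / ((n - m : ℤ) : ℝ) ^ 2 ≤ sqSum := by
  have hs : Summable fun j : ℤ => 1 / (j : ℝ) ^ 2 :=
    Real.summable_one_div_int_pow.2 one_lt_two
  have hs' := (Equiv.subLeft n).summable_iff.2 hs
  calc _ ≤ ∑' m : ℤ, 1 / ((n - m : ℤ) : ℝ) ^ 2 :=
        hs'.sum_le_tsum s fun j _ => div_nonneg zero_le_one (sq_nonneg _)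
    _ = sqSum := (Equiv.subLeft n).tsum_eq fun j : ℤ => 1 / (j : ℝ) ^ 2

lemma sum_weight_mul_pow_le (s : Finset ℤ) (w c : ℤ → ℝ) (hw : ∀ i, 0 ≤ w i) (hc : ∀ i, 0 ≤ c i)
    {σ : ℝ} (hσ : ∑ i ∈ s, w i ≤ σ) {p : ℕ} (hp : 1 ≤ p) :
    (∑ i ∈ s, w i * c i) ^ p ≤ σ ^ (p - 1) * ∑ i ∈ s, w i * c i ^ p := by
  have h := Real.inner_le_weight_mul_Lp_of_nonneg s (p := p) (by exact_mod_cast hp) w c hw hc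
  have hW : 0 ≤ ∑ i ∈ s, w i := Finset.sum_nonneg fun i _ => hw i
  have hC : 0 ≤ ∑ i ∈ s, w i * c i ^ p :=
    Finset.sum_nonneg fun i _ => mul_nonneg (hw i) (pow_nonneg (hc i) _)
  simp only [Real.rpow_natCast] at h
  have hp0 : (p : ℝ) ≠ 0 := by positivity
  calc (∑ i ∈ s, w i * c i) ^ p
      ≤ ((∑ i ∈ s, w i) ^ (1 - (p : ℝ)⁻¹) * (∑ i ∈ s, w i * c i ^ p) ^ (p : ℝ)⁻¹) ^ p :=
        pow_le_pow_left₀ (Finset.sum_nonneg fun i _ => mul_nonneg (hw i) (hc i)) h _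
    _ = (∑ i ∈ s, w i) ^ (p - 1) * ∑ i ∈ s, w i * c i ^ p := by
        rw [mul_pow, ← Real.rpow_natCast (_ ^ (p : ℝ)⁻¹), ← Real.rpow_mul hC,
          inv_mul_cancel₀ hp0, Real.rpow_one, ← Real.rpow_natCast, ← Real.rpow_mul hW,
          ← Real.rpow_natCast _ (p - 1)]
        congr 2
        push_cast [hp]
        field_simp
    _ ≤ _ := by gcongr

lemma sum_norm_sqConv_pow_le (s : Finset ℤ) (a : ℤ → ℂ) {p : ℕ} (hp : 1 ≤ p) :
    ∑ n ∈ s, ‖sqConv s a n‖ ^ p ≤ sqSum ^ p * ∑ n ∈ s, ‖a n‖ ^ p := by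
  have h1 : ∀ n, ‖sqConv s a n‖ ^ p ≤
      sqSum ^ (p - 1) * ∑ m ∈ s, 1 / ((n - m : ℤ) : ℝ) ^ 2 * ‖a m‖ ^ p := fun n => by
    refine le_trans (pow_le_pow_left₀ (norm_nonneg _) (norm_sum_le _ _) _) ?_
    refine le_trans (le_of_eq ?_) (sum_weight_mul_pow_le s (fun m => 1 / ((n - m : ℤ) : ℝ) ^ 2)
      (fun m => ‖a m‖) (fun i => by positivity) (fun i => norm_nonneg _) (sum_inv_sq_le s n) hp)
    congr 1
    refine Finset.sum_congr rfl fun m _ => ?_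
    rw [norm_mul, norm_pow, norm_inv, Complex.norm_intCast, inv_pow, sq_abs, one_div]
  calc _ ≤ ∑ n ∈ s, sqSum ^ (p - 1) * ∑ m ∈ s, 1 / ((n - m : ℤ) : ℝ) ^ 2 * ‖a m‖ ^ p :=
        Finset.sum_le_sum fun n _ => h1 n
    _ = sqSum ^ (p - 1) * ∑ m ∈ s, (∑ n ∈ s, 1 / ((m - n : ℤ) : ℝ) ^ 2) * ‖a m‖ ^ p := by
        rw [← Finset.mul_sum, Finset.sum_comm]
        simp_rw [Finset.sum_mul]
        congr 1
        refine Finset.sum_congr rfl fun m _ => Finset.sum_congr rfl fun n _ => ?_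
        push_cast
        rw [← neg_sub (m : ℝ) n, neg_sq]
    _ ≤ sqSum ^ (p - 1) * ∑ m ∈ s, sqSum * ‖a m‖ ^ p := by
        have := sqSum_nonneg
        gcongr with m hm
        exact sum_inv_sq_le s m
    _ = _ := by
        rw [← Finset.mul_sum, ← mul_assoc, ← pow_succ, Nat.sub_add_cancel hp]

lemma sum_Icc_neg_succ (F : ℤ → ℂ) (N : ℕ) :
    ∑ n ∈ Finset.Icc (-((N + 1 : ℕ) : ℤ)) ((N + 1 : ℕ) : ℤ), F n =
      F (-N - 1) + (F (N + 1) + ∑ n ∈ Finset.Icc (-(N : ℤ)) N, F n) := by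
  have : Finset.Icc (-((N + 1 : ℕ) : ℤ)) ((N + 1 : ℕ) : ℤ) =
      insert (-(N : ℤ) - 1) (insert ((N : ℤ) + 1) (Finset.Icc (-(N : ℤ)) N)) := by
    ext x; simp only [Finset.mem_Icc, Finset.mem_insert]; push_cast; omega
  rw [this, Finset.sum_insert, Finset.sum_insert]
  · simp
  · simp only [Finset.mem_Icc, Finset.mem_insert]; omega

/-- The Hilbert kernel has vanishing principal value sum about any centre. -/
lemma tendsto_sum_kernel (m : ℤ) :
    Tendsto (fun N : ℕ => ∑ n ∈ Finset.Icc (-(N : ℤ)) N, ((n - m : ℤ) : ℂ)⁻¹) atTop (𝓝 0) := by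
  have tel : ∀ (F : ℤ → ℂ) (N : ℕ), ∑ n ∈ Finset.Icc (-(N : ℤ)) N, (F (n - 1) - F n) =
      F (-N - 1) - F N := by
    intro F N
    induction N with
    | zero => simp
    | succ N ih =>
      rw [sum_Icc_neg_succ, ih]
      push_cast
      rw [add_sub_cancel_right, neg_add']
      ring
  have step : ∀ (m : ℤ) (N : ℕ), ∑ n ∈ Finset.Icc (-(N : ℤ)) N, ((n - (m + 1) : ℤ) : ℂ)⁻¹ =
      ∑ n ∈ Finset.Icc (-(N : ℤ)) N, ((n - m : ℤ) : ℂ)⁻¹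
        + (((-N - 1 - m : ℤ) : ℂ)⁻¹ - ((N - m : ℤ) : ℂ)⁻¹) := by
    intro m N
    rw [← tel (fun n => ((n - m : ℤ) : ℂ)⁻¹), ← Finset.sum_add_distrib]
    refine Finset.sum_congr rfl fun n _ => ?_
    rw [show n - (m + 1) = n - 1 - m by ring]; ring
  have lim : ∀ m : ℤ, Tendsto (fun N : ℕ => ((-N - 1 - m : ℤ) : ℂ)⁻¹ - ((N - m : ℤ) : ℂ)⁻¹)
      atTop (𝓝 0) := by
    intro m
    have key : ∀ m : ℤ, Tendsto (fun N : ℕ => ((N - m : ℤ) : ℂ)⁻¹) atTop (𝓝 0) := by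
      intro m
      refine tendsto_inv₀_cobounded.comp (tendsto_norm_atTop_iff_cobounded.1 ?_)
      simp only [Complex.norm_intCast]
      refine tendsto_abs_atTop_atTop.comp (tendsto_intCast_atTop_atTop.comp ?_)
      simp only [sub_eq_add_neg]
      exact tendsto_atTop_add_const_right _ _ tendsto_natCast_atTop_atTop
    have h1 := (key (-1 - m)).neg.sub (key m)
    simp only [neg_zero, sub_zero] at h1
    refine h1.congr fun N => ?_
    rw [← inv_neg]; congr 2; push_cast; ring
  induction m using Int.induction_on with
  | zero =>
    refine tendsto_const_nhds.congr fun N => ?_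
    simp only [sub_zero]
    induction N with
    | zero => simp
    | succ N ih =>
      rw [sum_Icc_neg_succ, ← ih]
      push_cast
      rw [← neg_add', inv_neg]
      ring
  | succ i ih =>
    simp_rw [step]
    simpa using ih.add (lim i)
  | pred i ih =>
    have := ih.sub (lim (-i - 1))
    rw [sub_zero] at this
    refine this.congr fun N => ?_
    rw [sub_eq_iff_eq_add, ← step]
    simp

lemma sum_norm_mul_sqConv_pow_le (s : Finset ℤ) (a : ℤ → ℂ) {p : ℕ} (hp : 1 ≤ p) :
    ∑ n ∈ s, (‖a n‖ * ‖sqConv s a n‖) ^ p ≤ sqSum ^ p * ∑ n ∈ s, ‖a n‖ ^ (2 * p) := by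
  have hσ := sqSum_nonneg
  have hy : 0 ≤ ∑ n ∈ s, ‖a n‖ ^ (2 * p) := Finset.sum_nonneg fun i _ => by positivity
  refine le_of_sq_le_sq ?_ (by positivity)
  have h1 := Finset.sum_mul_sq_le_sq_mul_sq s (fun n => ‖a n‖ ^ p) (fun n => ‖sqConv s a n‖ ^ p)
  have h2 := sum_norm_sqConv_pow_le s a (p := 2 * p) (by omega)
  simp only [← pow_mul, mul_comm p 2] at h1
  simp only [mul_pow]
  calc _ ≤ _ := h1
    _ ≤ (∑ n ∈ s, ‖a n‖ ^ (2 * p)) * (sqSum ^ (2 * p) * ∑ n ∈ s, ‖a n‖ ^ (2 * p)) := by gcongr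
    _ = _ := by ring

lemma sum_norm_hilb_sq_le (s : Finset ℤ) (a : ℤ → ℂ) :
    ∑ n ∈ s, ‖hilb s a n‖ ^ 2 ≤ 3 * sqSum * ∑ n ∈ s, ‖a n‖ ^ 2 := by
  classical
  set a' : ℤ → ℂ := fun m => if m ∈ s then a m else 0 with ha'
  have hlim : Tendsto (fun N : ℕ => 2 * ∑ m ∈ s, ‖∑ n ∈ Finset.Icc (-(N : ℤ)) N,
      ((n - m : ℤ) : ℂ)⁻¹‖ * (‖a m‖ * ‖hilb s a m‖) + 3 * sqSum * ∑ n ∈ s, ‖a n‖ ^ 2) atTop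
      (𝓝 (2 * ∑ m ∈ s, ‖(0 : ℂ)‖ * (‖a m‖ * ‖hilb s a m‖) +
        3 * sqSum * ∑ n ∈ s, ‖a n‖ ^ 2)) :=
    ((tendsto_finsetSum _ fun m _ => (tendsto_sum_kernel m).norm.mul_const _).const_mul _).add_const _
  simp only [norm_zero, zero_mul, Finset.sum_const_zero, mul_zero, zero_add] at hlim
  have hT : ∀ᶠ N : ℕ in atTop, s ⊆ Finset.Icc (-(N : ℤ)) N := by
    filter_upwards [eventually_ge_atTop (∑ m ∈ s, m.natAbs)] with N hN m hm
    have := Finset.single_le_sum (f := Int.natAbs) (fun i _ => Nat.zero_le _) hm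
    rw [Finset.mem_Icc]; omega
  refine ge_of_tendsto hlim ?_
  filter_upwards [hT] with N hN
  set T := Finset.Icc (-(N : ℤ)) N with hTdef
  have hsub : ∀ g : ℤ → ℝ, (∀ m ∉ s, g m = 0) → ∑ m ∈ T, g m = ∑ m ∈ s, g m := fun g hg =>
    (Finset.sum_subset hN fun m _ hm => hg m hm).symm
  have hh : ∀ n, hilb T a' n = hilb s a n := fun n => by
    rw [hilb, hilb, ← Finset.sum_subset hN fun m _ hm => by simp [ha', hm]]
    exact Finset.sum_congr rfl fun m hm => by simp [ha', hm]
  have hc : ∀ n, hilb T (fun m => conj (a' m)) n = conj (hilb T a' n) := fun n => by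
    simp [hilb, map_sum, map_mul, map_inv₀]
  have hSc : ∀ n, sqConv T (fun m => conj (a' m)) n = conj (sqConv T a' n) := fun n => by
    simp [sqConv, map_sum, map_mul, map_inv₀]
  have hsw : ∀ g : ℤ → ℂ, ‖∑ n ∈ T, hilb T g n‖ ≤
      ∑ m ∈ T, ‖∑ n ∈ T, ((n - m : ℤ) : ℂ)⁻¹‖ * ‖g m‖ := fun g => by
    simp only [hilb]
    rw [Finset.sum_comm]
    refine (norm_sum_le _ _).trans (le_of_eq (Finset.sum_congr rfl fun m _ => ?_))
    rw [← Finset.sum_mul, norm_mul]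
  have hsw' : ∀ g : ℤ → ℂ, (∀ m, ‖g m‖ = ‖a' m‖ * ‖hilb s a m‖) → ‖∑ n ∈ T, hilb T g n‖ ≤
      ∑ m ∈ s, ‖∑ n ∈ T, ((n - m : ℤ) : ℂ)⁻¹‖ * (‖a m‖ * ‖hilb s a m‖) := fun g hg => by
    refine (hsw g).trans (le_of_eq ?_)
    rw [hsub _ fun m hm => by simp [hg, ha', hm]]
    exact Finset.sum_congr rfl fun m hm => by simp [hg, ha', hm]
  have hy : ∑ m ∈ T, ‖a' m‖ ^ 2 = ∑ m ∈ s, ‖a m‖ ^ 2 := by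
    rw [hsub _ fun m hm => by simp [ha', hm]]
    exact Finset.sum_congr rfl fun m hm => by simp [ha', hm]
  have hid : ∀ n ∈ T, hilb T a' n * conj (hilb T a' n) =
      hilb T (fun m => a' m * conj (hilb T a' m)) n + hilb T (fun m => conj (a' m) * hilb T a' m) n
      + sqConv T (fun m => a' m * conj (a' m)) n + a' n * conj (sqConv T a' n)
      + conj (a' n) * sqConv T a' n := fun n hn => by
    have := hilb_mul_hilb T a' (fun m => conj (a' m)) hn
    simpa only [hc, hSc] using this
  have hsum := Finset.sum_congr rfl hid
  simp only [Finset.sum_add_distrib] at hsum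
  have e1 : ∑ n ∈ T, ‖hilb s a n‖ ^ 2 = ‖∑ n ∈ T, hilb T a' n * conj (hilb T a' n)‖ := by
    simp_rw [Complex.mul_conj, ← Complex.ofReal_sum, Complex.normSq_eq_norm_sq, hh]
    rw [Complex.norm_real, Real.norm_of_nonneg (Finset.sum_nonneg fun i _ => by positivity)]
  have b1 := hsw' (fun m => a' m * conj (hilb T a' m)) fun m => by simp [hh]
  have b2 := hsw' (fun m => conj (a' m) * hilb T a' m) fun m => by simp [hh]
  have b3 : ‖∑ n ∈ T, sqConv T (fun m => a' m * conj (a' m)) n‖ ≤ sqSum * ∑ n ∈ s, ‖a n‖ ^ 2 := by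
    refine (norm_sum_le _ _).trans ?_
    have := sum_norm_sqConv_pow_le T (fun m => a' m * conj (a' m)) le_rfl
    simp only [pow_one, norm_mul, RCLike.norm_conj, ← sq] at this
    rwa [hy] at this
  have b45 := sum_norm_mul_sqConv_pow_le T a' le_rfl
  simp only [pow_one, mul_one, hy] at b45
  have b4 : ‖∑ n ∈ T, a' n * conj (sqConv T a' n)‖ ≤ sqSum * ∑ n ∈ s, ‖a n‖ ^ 2 := by
    refine (norm_sum_le _ _).trans ?_
    simpa only [norm_mul, RCLike.norm_conj] using b45
  have b5 : ‖∑ n ∈ T, conj (a' n) * sqConv T a' n‖ ≤ sqSum * ∑ n ∈ s, ‖a n‖ ^ 2 := by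
    refine (norm_sum_le _ _).trans ?_
    simpa only [norm_mul, RCLike.norm_conj] using b45
  calc ∑ n ∈ s, ‖hilb s a n‖ ^ 2 ≤ ∑ n ∈ T, ‖hilb s a n‖ ^ 2 :=
        Finset.sum_le_sum_of_subset_of_nonneg hN fun _ _ _ => by positivity
    _ = _ := e1.trans (congrArg norm hsum)
    _ ≤ _ := norm_add_le_of_le (norm_add_le_of_le (norm_add_le_of_le (norm_add_le_of_le b1 b2) b3)
          b4) b5
    _ = _ := by ring

lemma add_add_pow_le_of_nonneg {x y z : ℝ} (hx : 0 ≤ x) (hy : 0 ≤ y) (hz : 0 ≤ z) (p : ℕ) :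
    (x + y + z) ^ p ≤ 3 ^ p * (x ^ p + y ^ p + z ^ p) := by
  have h : x + y + z ≤ 3 * max x (max y z) := by
    linarith [le_max_left x (max y z), le_max_right x (max y z), le_max_left y z, le_max_right y z]
  refine (pow_le_pow_left₀ (by positivity) h p).trans ?_
  rw [mul_pow]
  gcongr
  have := pow_nonneg hx p
  have := pow_nonneg hy p
  have := pow_nonneg hz p
  rcases max_choice x (max y z) with h | h <;> rw [h]
  · linarith
  · rcases max_choice y z with h | h <;> rw [h] <;> linarith

/-- The exponent of a finite-section bound for the Hilbert transform can be doubled. -/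
lemma sum_norm_hilb_pow_two_mul_le {p : ℕ} (hp : 1 ≤ p) {C : ℝ}
    (h : ∀ s a, ∑ n ∈ s, ‖hilb s a n‖ ^ p ≤ C * ∑ n ∈ s, ‖a n‖ ^ p) :
    ∃ C' : ℝ, 0 ≤ C' ∧ ∀ s a, ∑ n ∈ s, ‖hilb s a n‖ ^ (2 * p) ≤ C' * ∑ n ∈ s, ‖a n‖ ^ (2 * p) := by
  have hσ := sqSum_nonneg
  set A : ℝ := 3 ^ p * 2 ^ p * C with hA
  set B : ℝ := 3 ^ p * (sqSum ^ p + 2 ^ p * sqSum ^ p) with hB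
  refine ⟨A ^ 2 + 2 * B, by positivity, fun s a => ?_⟩
  set x := ∑ n ∈ s, ‖hilb s a n‖ ^ (2 * p) with hx
  set y := ∑ n ∈ s, ‖a n‖ ^ (2 * p) with hy
  set z := ∑ n ∈ s, (‖a n‖ * ‖hilb s a n‖) ^ p with hz
  have hx0 : 0 ≤ x := Finset.sum_nonneg fun i _ => by positivity
  have hy0 : 0 ≤ y := Finset.sum_nonneg fun i _ => by positivity
  have hzxy : z ^ 2 ≤ y * x := by
    have := Finset.sum_mul_sq_le_sq_mul_sq s (fun n => ‖a n‖ ^ p) (fun n => ‖hilb s a n‖ ^ p)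
    simpa only [← pow_mul, mul_comm p 2, ← mul_pow] using this
  have hpt : ∀ n ∈ s, ‖hilb s a n‖ ^ (2 * p) ≤
      3 ^ p * (2 ^ p * ‖hilb s (fun m => a m * hilb s a m) n‖ ^ p +
        ‖sqConv s (fun m => a m * a m) n‖ ^ p + 2 ^ p * (‖a n‖ * ‖sqConv s a n‖) ^ p) := by
    intro n hn
    rw [pow_mul, sq, ← norm_mul, hilb_mul_hilb s a a hn, ← mul_pow, ← mul_pow]
    refine le_trans (pow_le_pow_left₀ (norm_nonneg _) ?_ p)
      (add_add_pow_le_of_nonneg (by positivity) (by positivity) (by positivity) p)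
    rw [add_assoc _ (a n * _), ← two_mul, ← two_mul]
    refine norm_add_le_of_le (norm_add_le_of_le ?_ le_rfl) ?_ <;> simp
  have h1 := h s (fun m => a m * hilb s a m)
  have h2 := sum_norm_sqConv_pow_le s (fun m => a m * a m) hp
  have h3 := sum_norm_mul_sqConv_pow_le s a hp
  simp only [norm_mul] at h1 h2
  simp only [← sq, ← pow_mul] at h2
  have hmain : x ≤ A * z + B * y := by
    calc x ≤ _ := Finset.sum_le_sum hpt
      _ = 3 ^ p * (2 ^ p * ∑ n ∈ s, ‖hilb s (fun m => a m * hilb s a m) n‖ ^ p +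
          ∑ n ∈ s, ‖sqConv s (fun m => a m ^ 2) n‖ ^ p +
          2 ^ p * ∑ n ∈ s, (‖a n‖ * ‖sqConv s a n‖) ^ p) := by
        simp only [← Finset.mul_sum, Finset.sum_add_distrib, sq]
      _ ≤ 3 ^ p * (2 ^ p * (C * z) + sqSum ^ p * y + 2 ^ p * (sqSum ^ p * y)) := by gcongr
      _ = _ := by rw [hA, hB]; ring
  have hAz : A * z ≤ (x + A ^ 2 * y) / 2 := by
    refine le_of_sq_le_sq ?_ (by positivity)
    nlinarith [sq_nonneg (x - A ^ 2 * y), mul_le_mul_of_nonneg_left hzxy (sq_nonneg A)]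
  linarith

lemma exists_sum_norm_hilb_pow_le (k : ℕ) :
    ∃ C : ℝ, 0 ≤ C ∧ ∀ s a, ∑ n ∈ s, ‖hilb s a n‖ ^ (2 ^ (k + 1)) ≤
      C * ∑ n ∈ s, ‖a n‖ ^ (2 ^ (k + 1)) := by
  induction k with
  | zero => exact ⟨3 * sqSum, by linarith [sqSum_nonneg], fun s a => sum_norm_hilb_sq_le s a⟩
  | succ k ih =>
    obtain ⟨C, -, h⟩ := ih
    rw [pow_succ' 2 (k + 1)]
    exact sum_norm_hilb_pow_two_mul_le Nat.one_le_two_pow h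

/-- Boundedness by `C` of the bilinear Hilbert form on `ℓ^(1/t) × ℓ^(1/(1-t))`, over finite
sections, with the entries written as a bounded factor times a power of a positive weight. -/
def FormBound (t C : ℝ) : Prop :=
  ∀ (A B : Finset ℤ) (u v : ℤ → ℂ) (f g : ℤ → ℝ), (∀ m, ‖u m‖ ≤ 1) → (∀ n, ‖v n‖ ≤ 1) →
    (∀ m, 0 < f m) → (∀ n, 0 < g n) → ∑ m ∈ A, f m ≤ 1 → ∑ n ∈ B, g n ≤ 1 →
    ‖∑ n ∈ B, ∑ m ∈ A, ((n - m : ℤ) : ℂ)⁻¹ * (u m * (f m ^ t : ℝ)) *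
      (v n * (g n ^ (1 - t) : ℝ))‖ ≤ C

lemma FormBound.symm {t C : ℝ} (h : FormBound t C) : FormBound (1 - t) C := by
  intro A B u v f g hu hv hf hg hA hB
  have := h B A v u g f hv hu hg hf hB hA
  rw [← norm_neg, Finset.sum_comm] at this
  refine le_trans (le_of_eq ?_) this
  congr 1
  simp only [← Finset.sum_neg_distrib]
  refine Finset.sum_congr rfl fun n _ => Finset.sum_congr rfl fun m _ => ?_
  rw [← neg_sub m n, sub_sub_cancel]
  push_cast
  rw [inv_neg]
  ring

/-- The Riesz–Thorin interpolation theorem for the Hilbert form. -/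
lemma FormBound.interpolate {t₀ t₁ t C : ℝ} (hC : 0 ≤ C) (h₀ : FormBound t₀ C)
    (h₁ : FormBound t₁ C) (hlt : t₀ < t₁) (ht₀ : t₀ ≤ t) (ht₁ : t ≤ t₁) : FormBound t C := by
  intro A B u v f g hu hv hf hg hA hB
  set Φ : ℂ → ℂ := fun z => ∑ n ∈ B, ∑ m ∈ A, ((n - m : ℤ) : ℂ)⁻¹ * (u m * (f m : ℂ) ^ z) *
    (v n * (g n : ℂ) ^ (1 - z)) with hΦ
  have hf' : ∀ m, (f m : ℂ) ≠ 0 := fun m => by exact_mod_cast (hf m).ne'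
  have hg' : ∀ m, (g m : ℂ) ≠ 0 := fun m => by exact_mod_cast (hg m).ne'
  have hd : Differentiable ℂ Φ := by
    refine Differentiable.fun_sum fun n _ => Differentiable.fun_sum fun m _ => ?_
    refine ((Differentiable.const_cpow differentiable_id (.inl (hf' m))).const_mul _
      |>.const_mul _).mul ((Differentiable.const_cpow ?_ (.inl (hg' n))).const_mul _)
    exact differentiable_id.const_sub 1
  have hbdd : BddAbove ((norm ∘ Φ) '' Complex.HadamardThreeLines.verticalClosedStrip t₀ t₁) := by
    set G : ℝ → ℝ := fun x => ∑ n ∈ B, ∑ m ∈ A, ‖((n - m : ℤ) : ℂ)⁻¹‖ * f m ^ x * g n ^ (1 - x)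
      with hG
    have hGc : Continuous G := by
      refine continuous_finsetSum _ fun n _ => continuous_finsetSum _ fun m _ => ?_
      exact (continuous_const.mul (Real.continuous_const_rpow (hf m).ne')).mul
        ((Real.continuous_const_rpow (hg n).ne').comp (continuous_const.sub continuous_id))
    obtain ⟨M, hM⟩ := (isCompact_Icc (a := t₀) (b := t₁)).bddAbove_image hGc.continuousOn
    refine ⟨M, ?_⟩
    rintro _ ⟨z, hz, rfl⟩
    refine le_trans ?_ (hM ⟨z.re, hz, rfl⟩)
    refine (norm_sum_le _ _).trans (Finset.sum_le_sum fun n _ =>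
      (norm_sum_le _ _).trans (Finset.sum_le_sum fun m _ => ?_))
    rw [norm_mul, norm_mul, norm_mul, norm_mul, Complex.norm_cpow_eq_rpow_re_of_pos (hf m),
      Complex.norm_cpow_eq_rpow_re_of_pos (hg n), Complex.sub_re, Complex.one_re]
    have hfz := Real.rpow_nonneg (hf m).le z.re
    have hgz := Real.rpow_nonneg (hg n).le (1 - z.re)
    gcongr
    · exact mul_le_of_le_one_left hfz (hu m)
    · exact mul_le_of_le_one_left hgz (hv n)
  have split : ∀ (r : ℝ), 0 < r → ∀ z : ℂ, (r : ℂ) ^ z = (r : ℂ) ^ (z.im * Complex.I) *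
      (r ^ z.re : ℝ) := fun r hr z => by
    rw [Complex.ofReal_cpow hr.le, ← Complex.cpow_add _ _ (by exact_mod_cast hr.ne'), add_comm,
      Complex.re_add_im]
  have hedge : ∀ τ, FormBound τ C → ∀ z ∈ Complex.re ⁻¹' {τ}, ‖Φ z‖ ≤ C := by
    rintro τ hτ z rfl
    have ph : ∀ (r : ℝ), 0 < r → ∀ y : ℝ, ‖(r : ℂ) ^ (y * Complex.I)‖ = 1 := fun r hr y => by
      simp [Complex.norm_cpow_eq_rpow_re_of_pos hr]
    refine le_trans (le_of_eq ?_) (hτ A B (fun m => u m * (f m : ℂ) ^ (z.im * Complex.I))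
      (fun n => v n * (g n : ℂ) ^ (((1 - z).im : ℝ) * Complex.I)) f g
      (fun m => by rw [norm_mul, ph _ (hf m), mul_one]; exact hu m)
      (fun m => by rw [norm_mul, ph _ (hg m), mul_one]; exact hv m) hf hg hA hB)
    congr 1
    refine Finset.sum_congr rfl fun n _ => Finset.sum_congr rfl fun m _ => ?_
    rw [split _ (hf m) z, split _ (hg n) (1 - z), Complex.sub_re, Complex.one_re]
    ring
  have key := Complex.HadamardThreeLines.norm_le_interp_of_mem_verticalClosedStrip' (z := (t : ℂ))
    hlt ⟨by simpa using ht₀, by simpa using ht₁⟩ hd.diffContOnCl hbdd (hedge t₀ h₀) (hedge t₁ h₁)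
  rw [← Real.rpow_add_of_nonneg hC, sub_add_cancel, Real.rpow_one] at key
  · refine le_trans (le_of_eq ?_) key
    congr 1
    refine Finset.sum_congr rfl fun n _ => Finset.sum_congr rfl fun m _ => ?_
    rw [Complex.ofReal_cpow (hf m).le, Complex.ofReal_cpow (hg n).le]
    push_cast
    rfl
  · rw [sub_nonneg, div_le_one (by linarith), Complex.ofReal_re]; linarith
  · rw [Complex.ofReal_re]; exact div_nonneg (by linarith) (by linarith)

lemma formBound_of_sum_norm_hilb_pow_le {p : ℕ} (hp : 1 < p) {C : ℝ} (hC : 0 ≤ C)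
    (h : ∀ s a, ∑ n ∈ s, ‖hilb s a n‖ ^ p ≤ C * ∑ n ∈ s, ‖a n‖ ^ p) :
    FormBound (p : ℝ)⁻¹ (C ^ (p : ℝ)⁻¹) := by
  classical
  intro A B u v f g hu hv hf hg hA hB
  set t : ℝ := (p : ℝ)⁻¹ with ht
  have hp1 : (1 : ℝ) < p := by exact_mod_cast hp
  set a : ℤ → ℂ := fun m => if m ∈ A then u m * (f m ^ t : ℝ) else 0 with ha
  set S := A ∪ B with hS
  have hh : ∀ n, ∑ m ∈ A, ((n - m : ℤ) : ℂ)⁻¹ * (u m * (f m ^ t : ℝ)) = hilb S a n := fun n => by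
    rw [hilb, ← Finset.sum_subset Finset.subset_union_left fun m _ hm => by simp [ha, hm]]
    exact Finset.sum_congr rfl fun m hm => by simp [ha, hm]
  have hpq := Real.HolderConjugate.conjExponent hp1
  have hq : (1 - t) * Real.conjExponent p = 1 := by
    rw [ht, hpq.one_sub_inv, inv_mul_cancel₀ hpq.symm.ne_zero]
  have hX : ∑ n ∈ B, ‖hilb S a n‖ ^ p ≤ C := by
    calc _ ≤ ∑ n ∈ S, ‖hilb S a n‖ ^ p :=
          Finset.sum_le_sum_of_subset_of_nonneg Finset.subset_union_right
            fun _ _ _ => by positivity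
      _ ≤ C * ∑ n ∈ S, ‖a n‖ ^ p := h S a
      _ = C * ∑ n ∈ A, ‖a n‖ ^ p := by
          rw [hS, ← Finset.sum_subset Finset.subset_union_left fun m _ hm => by
            simp only [ha, hm, if_false, norm_zero, zero_pow (by omega : p ≠ 0)]]
      _ ≤ C * ∑ n ∈ A, f n := by
          gcongr with m hm
          simp only [ha, hm, if_true]
          rw [norm_mul, Complex.norm_real, Real.norm_of_nonneg (Real.rpow_nonneg (hf m).le _),
            mul_pow, ht, Real.rpow_inv_natCast_pow (hf m).le (by omega)]
          exact mul_le_of_le_one_left (hf m).le (pow_le_one₀ (norm_nonneg _) (hu m))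
      _ ≤ C := mul_le_of_le_one_right hC hA
  simp only [← Finset.sum_mul, hh]
  calc _ ≤ ∑ n ∈ B, ‖hilb S a n‖ * g n ^ (1 - t) := by
        refine (norm_sum_le _ _).trans (Finset.sum_le_sum fun n _ => ?_)
        rw [norm_mul, norm_mul, Complex.norm_real,
          Real.norm_of_nonneg (Real.rpow_nonneg (hg n).le _)]
        gcongr
        exact mul_le_of_le_one_left (Real.rpow_nonneg (hg n).le _) (hv n)
    _ ≤ (∑ n ∈ B, ‖hilb S a n‖ ^ (p : ℝ)) ^ (1 / (p : ℝ)) *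
        (∑ n ∈ B, (g n ^ (1 - t)) ^ Real.conjExponent p) ^ (1 / Real.conjExponent p) :=
        Real.inner_le_Lp_mul_Lq_of_nonneg B hpq (fun _ _ => norm_nonneg _)
          fun n _ => Real.rpow_nonneg (hg n).le _
    _ ≤ C ^ t * 1 := by
        have hg1 : ∀ n, (g n ^ (1 - t)) ^ Real.conjExponent p = g n := fun n => by
          rw [← Real.rpow_mul (hg n).le, hq, Real.rpow_one]
        simp only [Real.rpow_natCast, hg1, one_div]
        refine mul_le_mul (by gcongr) ?_ (Real.rpow_nonneg (Finset.sum_nonneg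
          fun n _ => (hg n).le) _) (Real.rpow_nonneg hC _)
        exact Real.rpow_le_one (Finset.sum_nonneg fun n _ => (hg n).le) hB
          (inv_nonneg.2 hpq.symm.nonneg)
    _ = C ^ t := mul_one _

lemma exists_formBound {p : ℝ} (hp : 1 < p) : ∃ C : ℝ, 0 ≤ C ∧ FormBound p⁻¹ C := by
  have ht0 : 0 < p⁻¹ := by positivity
  have ht1 : p⁻¹ < 1 := inv_lt_one_of_one_lt₀ hp
  obtain ⟨k, hk⟩ := exists_pow_lt_of_lt_one (lt_min ht0 (sub_pos.2 ht1))
    (show (1 / 2 : ℝ) < 1 by norm_num)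
  have hk' : ((2 ^ (k + 2) : ℕ) : ℝ)⁻¹ ≤ (1 / 2) ^ k / 4 := by
    push_cast
    rw [pow_add, one_div, inv_pow, mul_inv, div_eq_mul_inv]
    norm_num
  have hk1 : ((1 : ℝ) / 2) ^ k ≤ 1 := pow_le_one₀ (by norm_num) (by norm_num)
  have hkp : (0 : ℝ) < (1 / 2) ^ k := by positivity
  obtain ⟨C, hC, h⟩ := exists_sum_norm_hilb_pow_le (k + 1)
  have hF := formBound_of_sum_norm_hilb_pow_le (Nat.one_lt_two_pow (by omega)) hC h
  rw [lt_min_iff] at hk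
  exact ⟨_, Real.rpow_nonneg hC _, hF.interpolate (Real.rpow_nonneg hC _) hF.symm
    (by linarith) (by linarith) (by linarith)⟩

lemma FormBound.sum_norm_hilb_rpow_le {p C : ℝ} (hp : 1 < p) (hC : 0 ≤ C) (h : FormBound p⁻¹ C)
    (A B : Finset ℤ) (a : ℤ → ℂ) :
    ∑ n ∈ B, ‖hilb A a n‖ ^ p ≤ C ^ p * ∑ m ∈ A, ‖a m‖ ^ p := by
  classical
  have hp0 : 0 < p := by linarith
  set X := ∑ m ∈ A, ‖a m‖ ^ p with hX
  set Y := ∑ n ∈ B, ‖hilb A a n‖ ^ p with hY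
  have hX0 : 0 ≤ X := Finset.sum_nonneg fun i _ => by positivity
  have hY0 : 0 ≤ Y := Finset.sum_nonneg fun i _ => by positivity
  rcases hY0.eq_or_lt with hY0 | hY0
  · rw [← hY0]; positivity
  have hX1 : 0 < X := by
    refine hX0.lt_of_ne fun h0 => hY0.ne' ?_
    rw [hX, eq_comm, Finset.sum_eq_zero_iff_of_nonneg fun i _ => by positivity] at h0
    refine Finset.sum_eq_zero fun n _ => ?_
    rw [hilb, Finset.sum_eq_zero, norm_zero, Real.zero_rpow hp0.ne']
    intro m hm
    have := (Real.rpow_eq_zero (norm_nonneg _) hp0.ne').1 (h0 m hm)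
    rw [norm_eq_zero.1 this, mul_zero]
  set H := hilb A a with hH
  set wt : (ℤ → ℂ) → ℝ → ℤ → ℝ := fun b Z m => if b m = 0 then 1 else ‖b m‖ ^ p / Z with hwt
  have wt_pos : ∀ b Z, 0 < Z → ∀ m, 0 < wt b Z m := fun b Z hZ m => by
    simp only [hwt]
    split_ifs with h0
    · exact one_pos
    · have := norm_pos_iff.2 h0; positivity
  have wt_sum : ∀ b (s : Finset ℤ) Z, 0 < Z → Z = ∑ m ∈ s, ‖b m‖ ^ p →
      ∑ m ∈ s with b m ≠ 0, wt b Z m ≤ 1 := fun b s Z hZ0 hZ => by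
    calc _ = ∑ m ∈ s with b m ≠ 0, ‖b m‖ ^ p / Z :=
          Finset.sum_congr rfl fun m hm => by simp [hwt, (Finset.mem_filter.1 hm).2]
      _ ≤ ∑ m ∈ s, ‖b m‖ ^ p / Z :=
          Finset.sum_le_sum_of_subset_of_nonneg (Finset.filter_subset _ _)
            fun _ _ _ => by positivity
      _ = 1 := by rw [← Finset.sum_div, ← hZ, div_self hZ0.ne']
  have nrm : ∀ w : ℂ, ‖w / ‖w‖‖ ≤ 1 := fun w => by
    rw [norm_div, Complex.norm_real, norm_norm]; exact div_self_le_one _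
  have key := h (A.filter fun m => a m ≠ 0) (B.filter fun n => H n ≠ 0)
    (fun m => a m / ‖a m‖) (fun n => conj (H n / ‖H n‖)) (wt a X) (wt H Y)
    (fun m => nrm _) (fun n => by rw [RCLike.norm_conj]; exact nrm _)
    (wt_pos a X hX1) (wt_pos H Y hY0) (wt_sum a A X hX1 hX) (wt_sum H B Y hY0 hY)
  have e1 : ∀ m, a m ≠ 0 → a m / ‖a m‖ * (wt a X m ^ p⁻¹ : ℝ) = a m * (X ^ (-p⁻¹) : ℝ) := by
    intro m hm
    have h0 : (‖a m‖ : ℂ) ≠ 0 := by exact_mod_cast norm_ne_zero_iff.2 hm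
    simp only [hwt, hm, if_false]
    rw [Real.div_rpow (by positivity) hX0, Real.rpow_rpow_inv (norm_nonneg _) hp0.ne',
      Real.rpow_neg hX0]
    push_cast
    field_simp
  have e2 : ∀ n, H n ≠ 0 → H n * (conj (H n / ‖H n‖) * (wt H Y n ^ (1 - p⁻¹) : ℝ)) =
      ((‖H n‖ ^ p * Y ^ (p⁻¹ - 1) : ℝ) : ℂ) := by
    intro n hn
    have h0 : 0 < ‖H n‖ := norm_pos_iff.2 hn
    have h0' : (‖H n‖ : ℂ) ≠ 0 := by exact_mod_cast h0.ne'
    have e3 : ‖H n‖ ^ (p * (1 - p⁻¹)) = ‖H n‖ ^ p / ‖H n‖ := by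
      rw [mul_sub, mul_inv_cancel₀ hp0.ne', mul_one, Real.rpow_sub_one h0.ne']
    have e4 : H n * conj (H n) = (‖H n‖ : ℂ) ^ 2 := by
      rw [Complex.mul_conj, Complex.normSq_eq_norm_sq]; push_cast; rfl
    simp only [hwt, hn, if_false]
    rw [Real.div_rpow (by positivity) hY0.le, ← Real.rpow_mul (norm_nonneg _), e3,
      ← neg_sub 1 p⁻¹, Real.rpow_neg hY0.le, map_div₀, Complex.conj_ofReal, ← mul_assoc,
      mul_div_assoc', e4]
    push_cast
    field_simp
  have esum : ∑ n ∈ B with H n ≠ 0, ∑ m ∈ A with a m ≠ 0,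
      ((n - m : ℤ) : ℂ)⁻¹ * (a m / ‖a m‖ * (wt a X m ^ p⁻¹ : ℝ)) *
        (conj (H n / ‖H n‖) * (wt H Y n ^ (1 - p⁻¹) : ℝ)) =
      ((X ^ (-p⁻¹) * Y ^ p⁻¹ : ℝ) : ℂ) := by
    have inner : ∀ n, ∑ m ∈ A with a m ≠ 0,
        ((n - m : ℤ) : ℂ)⁻¹ * (a m / ‖a m‖ * (wt a X m ^ p⁻¹ : ℝ)) =
          (X ^ (-p⁻¹) : ℝ) * H n := fun n => by
      rw [hH, hilb, Finset.mul_sum, Finset.sum_filter]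
      refine Finset.sum_congr rfl fun m _ => ?_
      split_ifs with hm
      · rw [e1 m hm]; ring
      · rw [not_not.1 hm]; simp
    simp only [← Finset.sum_mul, inner]
    have : ∀ n ∈ B.filter fun n => H n ≠ 0, ((X ^ (-p⁻¹) : ℝ) : ℂ) * H n *
        (conj (H n / ‖H n‖) * (wt H Y n ^ (1 - p⁻¹) : ℝ)) =
        ((X ^ (-p⁻¹) * Y ^ (p⁻¹ - 1) * ‖H n‖ ^ p : ℝ) : ℂ) := fun n hn => by
      rw [mul_assoc, e2 n (Finset.mem_filter.1 hn).2]; push_cast; ring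
    rw [Finset.sum_congr rfl this, ← Complex.ofReal_sum, ← Finset.mul_sum]
    have hYf : ∑ n ∈ B with H n ≠ 0, ‖H n‖ ^ p = Y := by
      rw [hY]
      refine Finset.sum_filter_of_ne fun n _ hn h0 => hn ?_
      rw [h0, norm_zero, Real.zero_rpow hp0.ne']
    rw [hYf, mul_assoc, ← Real.rpow_add_one hY0.ne', sub_add_cancel]
  rw [esum, Complex.norm_real, Real.norm_of_nonneg (by positivity), Real.rpow_neg hX0,
    inv_mul_le_iff₀ (by positivity)] at key
  have := Real.rpow_le_rpow (by positivity) key hp0.le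
  rwa [Real.rpow_inv_rpow hY0.le hp0.ne', Real.mul_rpow (by positivity) hC,
    Real.rpow_inv_rpow hX0 hp0.ne', mul_comm] at this

lemma summable_kernel_mul {p : ℝ} (hp : 1 < p) {a : ℤ → ℂ} (ha : Summable fun n => ‖a n‖ ^ p)
    (n : ℤ) : Summable fun m : ℤ => ((n - m : ℤ) : ℂ)⁻¹ * a m := by
  have hpq := (Real.HolderConjugate.conjExponent hp).symm
  refine Summable.of_norm ?_
  simp only [norm_mul]
  refine Real.summable_mul_of_Lp_Lq_of_nonneg hpq (fun _ => norm_nonneg _)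
    (fun _ => norm_nonneg _) ?_ ha
  have hs : Summable fun j : ℤ => |(j : ℝ)| ^ (-Real.conjExponent p) :=
    Real.summable_abs_int_rpow hpq.lt
  have := (Equiv.subLeft n).summable_iff.2 hs
  refine this.congr fun m => ?_
  simp only [Function.comp, Equiv.subLeft_apply]
  rw [norm_inv, Complex.norm_intCast, Real.rpow_neg (abs_nonneg _), Real.inv_rpow (abs_nonneg _)]

/-- the discrete Hilbert transform, convolution with the kernel `(1/j)_{j≠0}`,
is bounded on `ℓ^p(ℤ)` for `1 < p < ∞`. -/
theorem discrete_hilbert_transform_bounded (p : ℝ) (hp : 1 < p) :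
    ∃ C : ℝ, 0 < C ∧ ∀ a : ℤ → ℂ, Summable (fun n => ‖a n‖ ^ p) →
      (∑' n : ℤ, ‖∑' j : ℤ, if j = 0 then 0 else a (n - j) / (j : ℂ)‖ ^ p) ≤
        C * ∑' n : ℤ, ‖a n‖ ^ p := by
  obtain ⟨C, hC, h⟩ := exists_formBound hp
  refine ⟨C ^ p + 1, by positivity, fun a ha => ?_⟩
  have hsum0 : 0 ≤ ∑' n : ℤ, ‖a n‖ ^ p := tsum_nonneg fun n => by positivity
  refine le_trans ?_ (mul_le_mul_of_nonneg_right (le_add_of_nonneg_right zero_le_one) hsum0)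
  have e : ∀ n : ℤ, (∑' j : ℤ, if j = 0 then 0 else a (n - j) / (j : ℂ)) =
      ∑' m : ℤ, ((n - m : ℤ) : ℂ)⁻¹ * a m := fun n => by
    rw [← (Equiv.subLeft n).tsum_eq fun m : ℤ => ((n - m : ℤ) : ℂ)⁻¹ * a m]
    refine tsum_congr fun j => ?_
    simp only [Equiv.subLeft_apply, sub_sub_cancel]
    split_ifs with hj
    · simp [hj]
    · rw [div_eq_inv_mul]
  simp only [e]
  refine Real.tsum_le_of_sum_le (fun n => by positivity) fun B => ?_
  have hlim : Tendsto (fun A : Finset ℤ => ∑ n ∈ B, ‖hilb A a n‖ ^ p) atTop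
      (𝓝 (∑ n ∈ B, ‖∑' m : ℤ, ((n - m : ℤ) : ℂ)⁻¹ * a m‖ ^ p)) :=
    tendsto_finsetSum _ fun n _ =>
      (summable_kernel_mul hp ha n).hasSum.norm.rpow_const (.inr (by linarith))
  refine le_of_tendsto' hlim fun A => (h.sum_norm_hilb_rpow_le hp hC A B a).trans ?_
  gcongr
  exact ha.sum_le_tsum A fun n _ => by positivity
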